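/- Let A be a finite-dimensional left-symmetric color algebra over k with respect to ε, and let P be a Nijenhuis operator on A with ε(|P|,|P|) = 1. Then for every d ∈ ℕ and every c ∈ k, the map c·P^d (which is homogeneous of degree d·|P|) is again a Nijenhuis operator on A. -/

import Mathlib

open scoped TensorProduct

/-- A skew-symmetric bicharacter of an abelian group `G` over a field `k`. -/
structure Bicharacter (G : Type*) (k : Type*) [AddCommGroup G] [Field k] where
  ε : G → G → k
  ne_zero : ∀ a b : G, ε a b ≠ 0
  add_left : ∀ a b c : G, ε (a + b) c = ε a c * ε b c
  add_right : ∀ a b c : G, ε a (b + c) = ε a b * ε a c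
  skew : ∀ a b : G, ε a b * ε b a = 1

/-- `(A, 𝒜, μ)` is a left-symmetric color algebra over `k` with respect to the
skew-symmetric bicharacter `ε`: the grading `𝒜` is an internal direct sum
decomposition of `A`, the multiplication `μ` respects the grading, and the
left-symmetric color identity holds on homogeneous elements. -/
structure IsLSCA {G k A : Type*} [AddCommGroup G] [DecidableEq G] [Field k]
    [AddCommGroup A] [Module k A]
    (ε : Bicharacter G k) (𝒜 : G → Submodule k A) (μ : A →ₗ[k] A →ₗ[k] A) : Prop where
  internal : DirectSum.IsInternal 𝒜
  graded_mul : ∀ a b : G, ∀ x ∈ 𝒜 a, ∀ y ∈ 𝒜 b, μ x y ∈ 𝒜 (a + b)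
  left_symm : ∀ a b c : G, ∀ x ∈ 𝒜 a, ∀ y ∈ 𝒜 b, ∀ z ∈ 𝒜 c,
    μ (μ x y) z - μ x (μ y z) = ε.ε a b • (μ (μ y x) z - μ y (μ x z))

/-- `P` is a Nijenhuis operator on the left-symmetric color algebra `A`, homogeneous
of degree `c`:  `P(x)P(y) = ε(|P|+|x|,|P|) P(P(x)y) + P(x P(y)) − ε(|x|,|P|) P(P(xy))`
for all homogeneous `x, y`. -/
def IsNijenhuisOp {G k A : Type*} [AddCommGroup G] [Field k] [AddCommGroup A] [Module k A]
    (ε : Bicharacter G k) (𝒜 : G → Submodule k A) (μ : A →ₗ[k] A →ₗ[k] A)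
    (c : G) (P : A →ₗ[k] A) : Prop :=
  (∀ a : G, ∀ x ∈ 𝒜 a, P x ∈ 𝒜 (a + c)) ∧
  ∀ a b : G, ∀ x ∈ 𝒜 a, ∀ y ∈ 𝒜 b,
    μ (P x) (P y)
      = ε.ε (c + a) c • P (μ (P x) y) + P (μ x (P y)) - ε.ε a c • P (P (μ x y))

/-- `P` is a Rota-Baxter operator of weight `lam` on the left-symmetric color algebra
`A`, homogeneous of degree `c`:
`P(x)P(y) = ε(|P|+|x|,|P|) P(P(x)y) + P(x P(y)) + lam·P(xy)` for all homogeneous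
`x, y`. -/
def IsRotaBaxterOp {G k A : Type*} [AddCommGroup G] [Field k] [AddCommGroup A] [Module k A]
    (ε : Bicharacter G k) (𝒜 : G → Submodule k A) (μ : A →ₗ[k] A →ₗ[k] A)
    (c : G) (lam : k) (P : A →ₗ[k] A) : Prop :=
  (∀ a : G, ∀ x ∈ 𝒜 a, P x ∈ 𝒜 (a + c)) ∧
  ∀ a b : G, ∀ x ∈ 𝒜 a, ∀ y ∈ 𝒜 b,
    μ (P x) (P y)
      = ε.ε (c + a) c • P (μ (P x) y) + P (μ x (P y)) + lam • P (μ x y)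

theorem nij_aux1 {k A : Type*} [Field k] [AddCommGroup A] [Module k A] (e : k)
    (F : ℕ → ℕ → ℕ → A)
    (hF : ∀ i j n, F (i+1) (j+1) n = e • F (i+1) j (n+1) + F i (j+1) (n+1) - e • F i j (n+2))
    (p : ℕ) : ∀ j n, F p (j+1) n = e • F p j (n+1) + F 0 (j+1) (n+p) - e • F 0 j (n+p+1) := by
  induction p with
  | zero => intro j n; simp
  | succ p ih =>
    intro j n
    rw [hF, ih j (n+1), show n + 1 + p = n + (p + 1) by ring]
    abel

theorem nij_aux2 {k A : Type*} [Field k] [AddCommGroup A] [Module k A] (e : k)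
    (F : ℕ → ℕ → ℕ → A)
    (hF : ∀ i j n, F (i+1) (j+1) n = e • F (i+1) j (n+1) + F i (j+1) (n+1) - e • F i j (n+2))
    (p q : ℕ) : ∀ n, F p q n = e ^ q • F p 0 (n+q) + F 0 q (n+p) - e ^ q • F 0 0 (n+p+q) := by
  induction q with
  | zero => intro n; simp
  | succ q ih =>
    intro n
    rw [nij_aux1 e F hF p q n, ih (n+1), show n + 1 + p = n + p + 1 by ring,
      show n + 1 + q = n + (q + 1) by ring, show n + p + 1 + q = n + p + (q + 1) by ring,
      pow_succ']
    simp only [smul_sub, smul_add, smul_smul]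
    abel

/-- If `P` is a Nijenhuis operator of degree `|P| = c` on the
finite-dimensional left-symmetric color algebra `A` with `ε(|P|,|P|) = 1`, then for
every `d ∈ ℕ` and every `r ∈ k`, the map `r • P^d` (a "power function of degree `d`"
applied to `P`, homogeneous of degree `d • c`) is again a Nijenhuis operator on `A`. -/
theorem nijenhuis_power_function {G k A : Type*} [AddCommGroup G] [DecidableEq G] [Field k]
    [AddCommGroup A] [Module k A] [FiniteDimensional k A]
    (ε : Bicharacter G k) (𝒜 : G → Submodule k A) (μ : A →ₗ[k] A →ₗ[k] A)
    (hA : IsLSCA ε 𝒜 μ)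
    (c : G) (P : Module.End k A) (hP : IsNijenhuisOp ε 𝒜 μ c P)
    (hcc : ε.ε c c = 1) :
    ∀ (d : ℕ) (r : k), IsNijenhuisOp ε 𝒜 μ (d • c) (r • P ^ d) := by
  
  intro d r
  obtain ⟨hdeg, hN⟩ := hP
  have hpow : ∀ (n : ℕ) (a : G), ∀ x ∈ 𝒜 a, (P ^ n) x ∈ 𝒜 (a + n • c) := by
    intro n
    induction n with
    | zero => intro a x hx; simpa using hx
    | succ n ih =>
      intro a x hx
      rw [pow_succ', Module.End.mul_apply, succ_nsmul, ← add_assoc]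
      exact hdeg _ _ (ih a x hx)
  have hz : ∀ a, ε.ε 0 a = 1 := by
    intro a
    have h := ε.add_left 0 0 a
    rw [add_zero] at h
    exact (mul_eq_left₀ (ε.ne_zero 0 a)).1 h.symm
  have hz' : ∀ a, ε.ε a 0 = 1 := by
    intro a
    have h := ε.skew a 0
    rwa [hz, mul_one] at h
  have hl : ∀ (n : ℕ), ε.ε (n • c) c = 1 := by
    intro n
    induction n with
    | zero => simpa using hz c
    | succ n ih => rw [succ_nsmul, ε.add_left, ih, hcc, one_mul]
  have hr : ∀ (b : G) (n : ℕ), ε.ε b (n • c) = ε.ε b c ^ n := by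
    intro b n
    induction n with
    | zero => simpa using hz' b
    | succ n ih => rw [succ_nsmul, ε.add_right, ih, pow_succ]
  refine ⟨fun a x hx => Submodule.smul_mem _ _ (hpow d a x hx), ?_⟩
  intro a b x hx y hy
  have key := nij_aux2 (ε.ε a c) (fun i j n => (P ^ n) (μ ((P ^ i) x) ((P ^ j) y))) (by
    intro i j n
    have h := hN _ _ _ (hpow i a x hx) _ (hpow j b y hy)
    rw [ε.add_left, ε.add_left, hl, hcc, one_mul, mul_one] at h
    have h2 := congrArg (P ^ n) h
    simp only [map_add, map_sub, map_smul] at h2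
    have e1 : ∀ (m : ℕ) (z : A), (P ^ (m+1)) z = P ((P ^ m) z) := fun m z => by
      rw [pow_succ', Module.End.mul_apply]
    have e2 : ∀ (m : ℕ) (z : A), (P ^ m) (P z) = (P ^ (m+1)) z := fun m z => by
      rw [pow_succ, Module.End.mul_apply]
    rw [e2, e2, e2, e2, ← e1, ← e1] at h2
    exact h2) d d 0
  have he : ε.ε (d • c + a) (d • c) = ε.ε a c ^ d := by
    rw [hr, ε.add_left, hl, one_mul]
  rw [he, hr]
  simp only [zero_add, pow_zero, Module.End.one_apply, pow_add, Module.End.mul_apply] at key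
  simp only [LinearMap.smul_apply, map_smul, key, smul_sub, smul_add, smul_smul]
  ring_nf
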